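/- arXiv:2307.15211 — 2 statements merged into one kernel-verified Lean document; each statement's English description precedes it below -/
import Mathlib

section
/- Let D_1, D_2, D_3, D_4 be the four chord diagrams of order n obtained from a common configuration as described. For every set A of chords with c ∈ A and c' ∉ A (regarding A as a set of chords of each D_i), the genera of the corresponding partial duals satisfy g_A(D_1) = g_A(D_2) and g_A(D_3) = g_A(D_4). -/
/-- Number of cycles (orbits, counting fixed points) of a self-map:
the number of connected components of its functional graph. For a permutation
this is the number of cycles, counting fixed points. -/
noncomputable def cycles {α : Type*} (f : α → α) : ℕ :=
  Nat.card (Quot fun i j => f i = j)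

-- `restrictTo σ A` agrees with `σ` on `A` and fixes everything else.
-- If `A` is the set of endpoints of a set of chords of `σ`, this is `σ_A`.
open Classical in
noncomputable def restrictTo {α : Type*} (f : α → α) (A : Set α) : α → α :=
  fun i => if i ∈ A then f i else i

/-- The rotation `i ↦ i + 1` of the `2n` points of a chord diagram. -/
def rot (n : ℕ) : ZMod (2 * n) → ZMod (2 * n) := fun i => i + 1

/-- Genus of the partial dual of the chord diagram `σ` relative to the set of
chords whose endpoint set is the (`σ`-invariant) set `A`. -/
noncomputable def pdGenus (n : ℕ) (σ : ZMod (2 * n) → ZMod (2 * n))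
    (A : Set (ZMod (2 * n))) : ℕ :=
  (n + 2 - cycles (rot n ∘ restrictTo σ A) - cycles (rot n ∘ restrictTo σ Aᶜ)) / 2

/-- Genus of the one-vertex ribbon graph of the chord diagram `σ`. -/
noncomputable def genus (n : ℕ) (σ : ZMod (2 * n) → ZMod (2 * n)) : ℕ :=
  (n + 1 - cycles (rot n ∘ σ)) / 2

/-- The partial-dual genus polynomial `∂Γ_σ(z) = Σ_A z^{g_A(σ)}`, the sum being
over all sets `A` of chords of `σ` (encoded as `σ`-invariant subsets of the
`2n` points). -/
noncomputable def pdPoly (n : ℕ) (σ : ZMod (2 * n) → ZMod (2 * n)) : Polynomial ℤ :=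
  if h : n = 0 then 1 else
    haveI : NeZero (2 * n) := ⟨by omega⟩
    ∑ A ∈ Finset.univ.filter (fun A : Finset (ZMod (2 * n)) => ∀ i ∈ A, σ i ∈ A),
      Polynomial.X ^ pdGenus n σ (↑A : Set (ZMod (2 * n)))

/-- `φ : ZMod (2n-1) → ZMod (2n)` is the cyclic-order-preserving identification of
the `2n-1` configuration points with the complement of the inserted point `x`:
it avoids `x` and each step advances by one position on the circle, skipping `x`. -/
def IsInsertion {m N : ℕ} (φ : ZMod m → ZMod N) (x : ZMod N) : Prop :=
  φ 0 ≠ x ∧ ∀ j, φ (j + 1) = if φ j + 1 = x then φ j + 2 else φ j + 1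

/-- A configuration of `2n-1` marked points on the circle: a distinguished chord
`c = {p, q}`, a distinguished unpaired point `u`, and a fixed-point-free pairing
of the remaining `2n-4` points into background chords; all encoded by the
involution `τ` whose unique fixed point is `u` and with `τ p = q`. -/
def IsConfig (n : ℕ) (τ : ZMod (2 * n - 1) → ZMod (2 * n - 1))
    (p q u : ZMod (2 * n - 1)) : Prop :=
  Function.Involutive τ ∧ τ p = q ∧ p ≠ q ∧ τ u = u ∧ ∀ j, τ j = j → j = u

/-- `D` is the chord diagram of order `n` obtained from the configuration `τ`
by inserting the extra point `x` (via the order-preserving identification `φ`)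
together with the new chord `c' = {x, u}`; all other chords are unchanged. -/
def IsInsertedDiagram (n : ℕ) (τ : ZMod (2 * n - 1) → ZMod (2 * n - 1))
    (u : ZMod (2 * n - 1)) (φ : ZMod (2 * n - 1) → ZMod (2 * n)) (x : ZMod (2 * n))
    (D : ZMod (2 * n) → ZMod (2 * n)) : Prop :=
  IsInsertion φ x ∧ (∀ j, j ≠ u → D (φ j) = φ (τ j)) ∧ D (φ u) = x ∧ D x = φ u

/-!
Erasing a fixed point of a permutation `σ` from the circle does not change the number of cycles of
`r ∘ σ`: a cycle of `r ∘ σ` meets that point only on the way to the next point of the circle.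

Since `c' ∉ A`, the point `x` is fixed by `σ_A`, and erasing it leaves a count which does not depend
on where `x` was inserted. Since `c ∈ A`, the endpoint `p` of `c` is fixed by `σ_{A^c}`, and it may
be erased in place of `x`. As `x` is a neighbour of `p`, it then occupies the place of `p` whichever
side it was inserted on, so this count is that of the configuration with `p` joined to `u`.
-/

open Function

theorem cycles_eq_of_firstReturn {α β : Type*} [DecidableEq α] {f : α → α} {g : β → β}
    {b : β → α} {x : α} (hb : Injective b) (hrange : Set.range b = {x}ᶜ) (hx : f x ≠ x)
    (hg : ∀ j, b (g j) = if f (b j) = x then f x else f (b j)) : cycles f = cycles g := by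
  have exists_retract (y : α) : ∃ j, b j = if y = x then f x else y := by
    rw [← Set.mem_range, hrange, Set.mem_compl_singleton_iff]
    split_ifs <;> assumption
  choose a ha using exists_retract
  have hbx (j : β) : b j ≠ x := by simpa [hrange] using Set.mem_range_self (f := b) j
  have hab (j : β) : a (b j) = j := hb <| by rw [ha, if_neg (hbx j)]
  have hafb (j : β) : a (f (b j)) = g j := hb <| by rw [ha, hg]
  have hafx : a (f x) = a x := hb <| by rw [ha, ha, if_neg hx, if_pos rfl]
  have mk_skip (y : α) :
      Quot.mk (fun i j => f i = j) (if y = x then f x else y) = Quot.mk _ y := by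
    split_ifs with hy
    · exact (Quot.sound (hy ▸ rfl)).symm
    · rfl
  refine Nat.card_congr
    { toFun := Quot.lift (fun y => Quot.mk _ (a y)) ?_
      invFun := Quot.lift (fun j => Quot.mk _ (b j)) ?_
      left_inv := ?_
      right_inv := ?_ }
  · rintro y _ rfl
    by_cases hy : y = x
    · rw [hy, hafx]
    · obtain ⟨j, rfl⟩ : y ∈ Set.range b := hrange ▸ hy
      exact Quot.sound (by rw [hab, hafb])
  · rintro j _ rfl
    calc Quot.mk (fun i j => f i = j) (b j) = Quot.mk _ (f (b j)) := Quot.sound rfl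
      _ = Quot.mk _ (b (g j)) := by rw [hg, mk_skip]
  · rintro ⟨y⟩
    exact (congrArg _ (ha y)).trans (mk_skip y)
  · rintro ⟨j⟩
    exact congrArg _ (hab j)

theorem forall_zmod_of_add_one {m : ℕ} [NeZero m] {P : ZMod m → Prop} (a : ZMod m) (ha : P a)
    (hstep : ∀ i, P i → P (i + 1)) (i : ZMod m) : P i := by
  have shift (k : ℕ) : P (a + k) := by
    induction k with
    | zero => simpa using ha
    | succ k ih => simpa [add_assoc] using hstep _ ih
  simpa using shift (i - a).val

namespace IsInsertion

variable {m N : ℕ} {φ : ZMod m → ZMod N} {x : ZMod N}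

theorem nontrivial (h : IsInsertion φ x) : Nontrivial (ZMod N) := ⟨⟨_, _, h.1⟩⟩

theorem apply_ne [NeZero m] (h : IsInsertion φ x) (j : ZMod m) : φ j ≠ x := by
  have := h.nontrivial
  refine forall_zmod_of_add_one (P := fun j => φ j ≠ x) 0 h.1 (fun j _ => ?_) j
  rw [h.2]
  split_ifs with hjx
  · rw [← hjx, Ne, add_right_inj]
    intro h2
    exact one_ne_zero (α := ZMod N) (by linear_combination h2)
  · exact hjx

theorem range_eq [NeZero m] [NeZero N] (h : IsInsertion φ x) : Set.range φ = {x}ᶜ := by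
  have cover (y : ZMod N) : y ∈ Set.range φ ∨ y = x ∧ x + 1 ∈ Set.range φ := by
    refine forall_zmod_of_add_one
      (P := fun y => y ∈ Set.range φ ∨ y = x ∧ x + 1 ∈ Set.range φ)
      (φ 0) (.inl ⟨0, rfl⟩) ?_ y
    rintro _ (⟨j, rfl⟩ | ⟨rfl, hx⟩)
    · by_cases hjx : φ j + 1 = x
      · exact .inr ⟨hjx, j + 1, by rw [h.2, if_pos hjx]; linear_combination hjx⟩
      · exact .inl ⟨j + 1, by rw [h.2, if_neg hjx]⟩
    · exact .inl hx
  refine Set.Subset.antisymm (Set.range_subset_iff.2 h.apply_ne) fun y hy => ?_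
  exact (cover y).resolve_right fun hyx => hy hyx.1

theorem injective [NeZero m] (h : IsInsertion φ x) (hN : N = m + 1) : Injective φ := by
  have : NeZero N := ⟨by omega⟩
  have card_image : (Finset.univ.image φ).card = (Finset.univ : Finset (ZMod m)).card := by
    have image_eq : Finset.univ.image φ = {x}ᶜ := by
      apply Finset.coe_injective
      simpa using h.range_eq
    simp [image_eq, Finset.card_compl, ZMod.card, hN]
  simpa using Finset.card_image_iff.1 card_image

theorem cycles_add_one [NeZero m] (h : IsInsertion φ x) (hN : N = m + 1)
    {f : ZMod N → ZMod N} {g : ZMod m → ZMod m} (hfx : f x = x) (hfg : Semiconj φ g f) :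
    cycles (fun i => f i + 1) = cycles (fun j => g j + 1) := by
  have : NeZero N := ⟨by omega⟩
  have := h.nontrivial
  refine cycles_eq_of_firstReturn (h.injective hN) h.range_eq (by simp [hfx]) fun j => ?_
  rw [h.2, hfg.eq j, hfx]
  refine ite_congr rfl (fun hjx => ?_) fun _ => rfl
  linear_combination hjx

theorem update_of_adjacent [NeZero m] (h : IsInsertion φ x) (hN : N = m + 1) {p : ZMod m}
    (hp : x + 1 = φ p ∨ x = φ p + 1) : IsInsertion (update φ p x) (φ p) := by
  have hinj := h.injective hN
  have hpx := h.apply_ne p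
  refine ⟨?_, fun j => ?_⟩
  · rw [update_apply]
    split_ifs with h0
    exacts [hpx.symm, hinj.ne h0]
  have hj := h.2 j
  have hjx := h.apply_ne j
  -- Moving `p` to `x` turns the jump over `x` on one side of `p` into a jump over `φ p` on the
  -- other side; only the steps into and out of `p` are affected.
  by_cases hjp : j = p <;> by_cases hjp' : j + 1 = p
  · subst hjp
    grind
  · subst hjp
    rw [update_self, update_of_ne hjp']
    grind
  · rw [hjp', update_self, update_of_ne hjp]
    grind
  · have hne : φ j ≠ φ p := hinj.ne hjp
    have hne' : φ (j + 1) ≠ φ p := hinj.ne hjp'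
    rw [update_of_ne hjp, update_of_ne hjp']
    grind

end IsInsertion

theorem restrictTo_of_mem {α : Type*} (f : α → α) {A : Set α} {i : α} (hi : i ∈ A) :
    restrictTo f A i = f i := if_pos hi

theorem restrictTo_of_notMem {α : Type*} (f : α → α) {A : Set α} {i : α} (hi : i ∉ A) :
    restrictTo f A i = i := if_neg hi

theorem semiconj_restrictTo_image {α β : Type*} {b : β → α} (hb : Injective b) {g : β → β}
    {f : α → α} {S : Set β} (h : ∀ j ∈ S, b (g j) = f (b j)) :
    Semiconj b (restrictTo g S) (restrictTo f (b '' S)) := by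
  intro j
  by_cases hj : j ∈ S
  · rw [restrictTo_of_mem g hj, restrictTo_of_mem f (Set.mem_image_of_mem b hj), h j hj]
  · rw [restrictTo_of_notMem g hj, restrictTo_of_notMem f (mt hb.mem_set_image.1 hj)]

theorem IsInsertion.cycles_restrictTo_image {m N : ℕ} [NeZero m] {φ : ZMod m → ZMod N}
    {x : ZMod N} (h : IsInsertion φ x) (hN : N = m + 1) {σ : ZMod m → ZMod m}
    {D : ZMod N → ZMod N} {S : Set (ZMod m)} (hD : ∀ j ∈ S, φ (σ j) = D (φ j)) :
    cycles (fun i => restrictTo D (φ '' S) i + 1) = cycles (fun j => restrictTo σ S j + 1) := by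
  have hx : x ∉ φ '' S := fun ⟨j, _, hj⟩ => h.apply_ne j hj
  exact h.cycles_add_one hN (restrictTo_of_notMem D hx)
    (semiconj_restrictTo_image (h.injective hN) hD)

/-- The pairing `τ` with the unpaired point `u` joined to `p`; the chord `{p, u}` plays the role of
`c'` once `x` sits in the place of `p`. The former partner of `p` is not redirected, so this is an
involution only after restriction to a set avoiding that partner. -/
def joinChord {α : Type*} [DecidableEq α] (τ : α → α) (p u : α) : α → α :=
  update (update τ p u) u p

theorem image_update_insert_compl {α β : Type*} [DecidableEq β] {b : β → α} {x : α}
    (hb : Injective b) (hrange : Set.range b = {x}ᶜ) {B : Set β} {p : β} (hp : p ∈ B) :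
    update b p x '' insert p Bᶜ = (b '' B)ᶜ := by
  have hx : x ∉ b '' B := fun hx => (hrange ▸ Set.image_subset_range b B hx) rfl
  calc update b p x '' insert p Bᶜ = insert x (b '' Bᶜ) := by
        rw [Set.image_insert_eq, update_self]
        exact congrArg _ <|
          Set.image_congr fun j hj => update_of_ne (ne_of_mem_of_not_mem hp hj).symm _ _
    _ = insert x ({x}ᶜ \ b '' B) := by rw [Set.image_compl_eq_range_sdiff_image hb, hrange]
    _ = (b '' B)ᶜ := by grind

namespace IsInsertedDiagram

variable {n : ℕ} {τ : ZMod (2 * n - 1) → ZMod (2 * n - 1)} {p u : ZMod (2 * n - 1)}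
  {φ : ZMod (2 * n - 1) → ZMod (2 * n)} {x : ZMod (2 * n)} {D : ZMod (2 * n) → ZMod (2 * n)}
  {B : Set (ZMod (2 * n - 1))}

theorem cycles_restrictTo (h : IsInsertedDiagram n τ u φ x D) (hn : n ≠ 0) (hu : u ∉ B) :
    cycles (rot n ∘ restrictTo D (φ '' B)) = cycles (fun j => restrictTo τ B j + 1) := by
  have : NeZero (2 * n - 1) := ⟨by omega⟩
  exact h.1.cycles_restrictTo_image (by omega)
    fun j hj => (h.2.1 j (ne_of_mem_of_not_mem hj hu)).symm

theorem cycles_restrictTo_compl (h : IsInsertedDiagram n τ u φ x D) (hn : n ≠ 0)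
    (hx : x + 1 = φ p ∨ x = φ p + 1) (hτ : Set.MapsTo τ Bᶜ Bᶜ) (hp : p ∈ B) (hu : u ∉ B) :
    cycles (rot n ∘ restrictTo D (φ '' B)ᶜ) =
      cycles (fun j => restrictTo (joinChord τ p u) (insert p Bᶜ) j + 1) := by
  have : NeZero (2 * n - 1) := ⟨by omega⟩
  have : NeZero (2 * n) := ⟨by omega⟩
  have hN : 2 * n = 2 * n - 1 + 1 := by omega
  have hup : u ≠ p := (ne_of_mem_of_not_mem hp hu).symm
  rw [← image_update_insert_compl (h.1.injective hN) h.1.range_eq hp]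
  refine (h.1.update_of_adjacent hN hx).cycles_restrictTo_image hN ?_
  rintro j (rfl | hj)
  · simp [joinChord, hup, hup.symm, h.2.2.2]
  have hjp : j ≠ p := (ne_of_mem_of_not_mem hp hj).symm
  by_cases hju : j = u
  · simp [joinChord, hju, hup, h.2.2.1]
  · have hτjp : τ j ≠ p := (ne_of_mem_of_not_mem hp (hτ hj)).symm
    simp [joinChord, hjp, hju, hτjp, h.2.1 j hju]

end IsInsertedDiagram

theorem pdGenus_eq_of_c_not_c'_general {n : ℕ} (hn : n ≠ 0)
    {τ : ZMod (2 * n - 1) → ZMod (2 * n - 1)} {p u : ZMod (2 * n - 1)}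
    {φ φ' : ZMod (2 * n - 1) → ZMod (2 * n)} {x x' : ZMod (2 * n)}
    {D D' : ZMod (2 * n) → ZMod (2 * n)}
    (h : IsInsertedDiagram n τ u φ x D) (hx : x + 1 = φ p ∨ x = φ p + 1)
    (h' : IsInsertedDiagram n τ u φ' x' D') (hx' : x' + 1 = φ' p ∨ x' = φ' p + 1)
    {B : Set (ZMod (2 * n - 1))} (hB : Set.MapsTo τ Bᶜ Bᶜ) (hp : p ∈ B) (hu : u ∉ B) :
    pdGenus n D (φ '' B) = pdGenus n D' (φ' '' B) := by
  rw [pdGenus, pdGenus, h.cycles_restrictTo hn hu, h'.cycles_restrictTo hn hu,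
    h.cycles_restrictTo_compl hn hx hB hp hu, h'.cycles_restrictTo_compl hn hx' hB hp hu]

/-- For a set `A` of chords with `c ∈ A` and `c' ∉ A`, the partial duals satisfy
`g_A(D₁) = g_A(D₂)` and `g_A(D₃) = g_A(D₄)`. -/
theorem pdGenus_eq_of_c_not_c' (n : ℕ) (hn : 2 ≤ n)
    (τ : ZMod (2 * n - 1) → ZMod (2 * n - 1)) (p q u : ZMod (2 * n - 1))
    (hτ : IsConfig n τ p q u)
    (φ₁ φ₂ φ₃ φ₄ : ZMod (2 * n - 1) → ZMod (2 * n))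
    (x₁ x₂ x₃ x₄ : ZMod (2 * n))
    (D₁ D₂ D₃ D₄ : ZMod (2 * n) → ZMod (2 * n))
    (h₁ : IsInsertedDiagram n τ u φ₁ x₁ D₁) (hx₁ : x₁ + 1 = φ₁ p)
    (h₂ : IsInsertedDiagram n τ u φ₂ x₂ D₂) (hx₂ : x₂ = φ₂ p + 1)
    (h₃ : IsInsertedDiagram n τ u φ₃ x₃ D₃) (hx₃ : x₃ + 1 = φ₃ q)
    (h₄ : IsInsertedDiagram n τ u φ₄ x₄ D₄) (hx₄ : x₄ = φ₄ q + 1)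
    (B : Set (ZMod (2 * n - 1))) (hB : ∀ j ∈ B, τ j ∈ B)
    (hc : p ∈ B) (hc' : u ∉ B) :
    pdGenus n D₁ (φ₁ '' B) = pdGenus n D₂ (φ₂ '' B) ∧
    pdGenus n D₃ (φ₃ '' B) = pdGenus n D₄ (φ₄ '' B) := by
  have hBc : Set.MapsTo τ Bᶜ Bᶜ := fun j hj hτj => hj (hτ.1 j ▸ hB _ hτj)
  have hq : q ∈ B := hτ.2.1 ▸ hB p hc
  have hn0 : n ≠ 0 := by omega
  exact ⟨pdGenus_eq_of_c_not_c'_general hn0 h₁ (.inl hx₁) h₂ (.inr hx₂) hBc hc hc',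
    pdGenus_eq_of_c_not_c'_general hn0 h₃ (.inl hx₃) h₄ (.inr hx₄) hBc hq hc'⟩
end

section
/- (Sliding Lemma, chord-diagram form.) Let σ be a chord diagram of order n with distinct chords c = {p, q} and e, where the endpoint x of e is the immediate cyclic predecessor of p, and let σ' be the slide of e along c. Then c(r ∘ σ') = c(r ∘ σ); in particular the slide preserves the number of boundary components and the genus of the associated one-vertex ribbon graph: g(σ') = g(σ). -/
/-!
Take the sliding point `none` off the circle, so that the rotation fixes it, and let `g` be the
resulting boundary walk. Inserting `none` just before `p` composes `g` with the transposition of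
`none` and `p`, and inserting it just after `q` composes `g` with that of `none` and `q + 1`. Since
`p` is paired with `q`, we have `g p = q + 1`, so it suffices that `(a b) ∘ g` and `(a (g b)) ∘ g`
have equally many cycles. They differ only in the position of `b`: the first passes through `b` from
`g⁻¹ a` to `g b`, the second from `g⁻¹ b` to `a`, and cutting `b` out of its cycle leaves the same
map.
-/

open Equiv
open Function hiding swap

section Cycles

variable {α β : Type*}

theorem cycles_eq_of_semiconj (e : α ≃ β) {f : α → α} {g : β → β} (h : Semiconj e f g) :
    cycles f = cycles g :=
  Nat.card_congr <| Quot.congr e fun a b => by rw [← h a, e.apply_eq_iff_eq]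

/-- The set of cycles of `f`, whose cardinality is `cycles f`. -/
abbrev CycleSet (f : α → α) : Type _ := Quot fun i j => f i = j

/-- The cycle of `f` containing the point `i`. -/
abbrev cycleMk (f : α → α) (i : α) : CycleSet f := Quot.mk _ i

theorem cycleMk_apply (f : α → α) (i : α) : cycleMk f (f i) = cycleMk f i :=
  (Quot.sound (r := fun i j => f i = j) rfl).symm

variable [DecidableEq α]

/-- The map obtained from `f` by cutting the non-fixed point `a` out of its cycle: the first-return
map of `f` to the complement of `a`. -/
def bypass (f : α → α) (a : α) (ha : f a ≠ a) (i : {i // i ≠ a}) : {i // i ≠ a} :=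
  if h : f i = a then ⟨f a, ha⟩ else ⟨f i, h⟩

theorem coe_bypass (f : α → α) (a : α) (ha : f a ≠ a) (i : {i // i ≠ a}) :
    (bypass f a ha i : α) = if f i = a then f a else f i := by
  unfold bypass
  split_ifs <;> rfl

theorem cycleMk_coe_bypass (f : α → α) (a : α) (ha : f a ≠ a) (i : {i // i ≠ a}) :
    cycleMk f (bypass f a ha i) = cycleMk f i := by
  rw [coe_bypass]
  split_ifs with hi
  · rw [cycleMk_apply, ← cycleMk_apply f i, hi]
  · exact cycleMk_apply f i

/-- The retraction onto the complement of `a` that moves `a` to its successor `f a`. -/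
def pushOff (f : α → α) (a : α) (ha : f a ≠ a) (i : α) : {i // i ≠ a} :=
  if h : i = a then ⟨f a, ha⟩ else ⟨i, h⟩

theorem cycleMk_pushOff_apply (f : α → α) (a : α) (ha : f a ≠ a) (i : α) :
    cycleMk (bypass f a ha) (pushOff f a ha (f i)) =
      cycleMk (bypass f a ha) (pushOff f a ha i) := by
  by_cases hi : i = a
  · subst hi
    simp [pushOff, ha]
  · have hstep : pushOff f a ha (f i) = bypass f a ha (pushOff f a ha i) := by
      simp [pushOff, bypass, hi]
    rw [hstep, cycleMk_apply]

theorem cycleMk_coe_pushOff (f : α → α) (a : α) (ha : f a ≠ a) (i : α) :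
    cycleMk f (pushOff f a ha i) = cycleMk f i := by
  by_cases hi : i = a
  · simp [pushOff, hi, cycleMk_apply]
  · simp [pushOff, hi]

theorem pushOff_coe (f : α → α) (a : α) (ha : f a ≠ a) (i : {i // i ≠ a}) :
    pushOff f a ha i = i := by
  simp [pushOff, i.2]

theorem cycles_bypass (f : α → α) (a : α) (ha : f a ≠ a) : cycles (bypass f a ha) = cycles f :=
  Nat.card_congr
    { toFun := Quot.lift (fun i => cycleMk f i) fun i _ h => h ▸ (cycleMk_coe_bypass f a ha i).symm
      invFun := Quot.lift (fun i => cycleMk (bypass f a ha) (pushOff f a ha i))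
        fun i _ h => h ▸ (cycleMk_pushOff_apply f a ha i).symm
      left_inv := Quot.ind fun i => congrArg (cycleMk _) (pushOff_coe f a ha i)
      right_inv := Quot.ind (cycleMk_coe_pushOff f a ha) }

theorem cycles_swap_apply_comp {g : α → α} (hg : Injective g) {a b : α} (hab : a ≠ b)
    (hagb : a ≠ g b) : cycles (swap a (g b) ∘ g) = cycles (swap a b ∘ g) := by
  by_cases hb : g b = b
  · rw [hb]
  have hl : (swap a (g b) ∘ g) b = a := swap_apply_right _ _
  have hr : (swap a b ∘ g) b = g b := swap_apply_of_ne_of_ne hagb.symm hb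
  rw [← cycles_bypass (swap a (g b) ∘ g) b (by rwa [hl]),
    ← cycles_bypass (swap a b ∘ g) b (by rwa [hr])]
  congr 1
  funext ⟨i, hi⟩
  have hgi : g i ≠ g b := hg.ne hi
  apply Subtype.ext
  rw [coe_bypass, coe_bypass, hl, hr]
  by_cases hia : g i = a
  · simp [hia, hb]
  by_cases hib : g i = b
  · simp [hib, hab, swap_apply_of_ne_of_ne hab.symm (Ne.symm hb)]
  · simp [swap_apply_of_ne_of_ne hia hgi, swap_apply_of_ne_of_ne hia hib, hib]

end Cycles

namespace IsInsertion

variable {m N : ℕ} {φ : ZMod m → ZMod N} {x : ZMod N} {p : ZMod m}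

theorem surjective_elim [NeZero N] (h : IsInsertion φ x) (hp : x + 1 = φ p) :
    Surjective fun o : Option (ZMod m) => o.elim x φ := by
  have add_one_mem : ∀ o : Option (ZMod m), ∃ o' : Option (ZMod m), o'.elim x φ = o.elim x φ + 1
    | none => ⟨some p, hp.symm⟩
    | some j => by
      by_cases hj : φ j + 1 = x
      · exact ⟨none, hj.symm⟩
      · exact ⟨some (j + 1), (h.2 j).trans (if_neg hj)⟩
  have add_natCast_mem (k : ℕ) : ∃ o : Option (ZMod m), o.elim x φ = x + k := by
    induction k with
    | zero => exact ⟨none, by simp⟩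
    | succ k ih =>
      obtain ⟨o, ho⟩ := ih
      obtain ⟨o', ho'⟩ := add_one_mem o
      exact ⟨o', by rw [ho', ho, Nat.cast_succ, add_assoc]⟩
  intro y
  simpa using add_natCast_mem (y - x).val

variable [NeZero m]

theorem bijective_elim (h : IsInsertion φ x) (hN : N = m + 1) (hp : x + 1 = φ p) :
    Bijective fun o : Option (ZMod m) => o.elim x φ := by
  have : NeZero N := ⟨by omega⟩
  exact (Fintype.bijective_iff_surjective_and_card _).2 ⟨h.surjective_elim hp, by simp [hN]⟩

theorem apply_add_one_eq_iff (h : IsInsertion φ x) (hN : N = m + 1) (hp : x + 1 = φ p)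
    (j : ZMod m) : φ j + 1 = x ↔ j + 1 = p := by
  have hinj := (h.bijective_elim hN hp).injective
  have hstep := h.2 j
  constructor <;> intro hj
  · have hφ : φ (j + 1) = φ p := by
      rw [hstep, if_pos hj, ← hp, ← hj]
      ring
    exact Option.some_injective _ (hinj hφ)
  · by_contra hne
    rw [if_neg hne, hj, ← hp] at hstep
    exact Option.some_ne_none j (hinj (add_right_cancel hstep).symm)

theorem semiconj_elim_add_one (h : IsInsertion φ x) (hN : N = m + 1) (hp : x + 1 = φ p) :
    Semiconj (fun o : Option (ZMod m) => o.elim x φ)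
      (swap none (some p) ∘ Option.map (· + 1)) (· + 1)
  | none => by simp [hp]
  | some j => by
    have hiff := h.apply_add_one_eq_iff hN hp j
    by_cases hj : j + 1 = p
    · simp [hj, hiff.2 hj]
    · simp [swap_apply_of_ne_of_ne, hj, h.2 j, mt hiff.1 hj]

end IsInsertion

/-- The boundary walk of a configuration whose unpaired point `u` has been joined by a chord to a
new point `none` lying off the circle, where the rotation fixes it. -/
def detachedWalk {m : ℕ} (τ : ZMod m → ZMod m) (u : ZMod m) : Option (ZMod m) → Option (ZMod m) :=
  Option.map (· + 1) ∘ swap none (some u) ∘ Option.map τ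

section DetachedWalk

variable {m : ℕ} {τ : ZMod m → ZMod m} {u : ZMod m}

theorem detachedWalk_injective (hτ : Injective τ) : Injective (detachedWalk τ u) :=
  (Option.map_injective (add_left_injective 1)).comp
    ((swap _ _).injective.comp (Option.map_injective hτ))

theorem detachedWalk_some {j : ZMod m} (hj : τ j ≠ u) :
    detachedWalk τ u (some j) = some (τ j + 1) := by
  simp [detachedWalk, swap_apply_of_ne_of_ne, hj]

end DetachedWalk

namespace IsInsertedDiagram

variable {n : ℕ} {τ : ZMod (2 * n - 1) → ZMod (2 * n - 1)} {u p : ZMod (2 * n - 1)}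
  {φ : ZMod (2 * n - 1) → ZMod (2 * n)} {x : ZMod (2 * n)} {D : ZMod (2 * n) → ZMod (2 * n)}

theorem semiconj_elim (hD : IsInsertedDiagram n τ u φ x D) (hτ : Injective τ) (hu : τ u = u) :
    Semiconj (fun o : Option (ZMod (2 * n - 1)) => o.elim x φ)
      (swap none (some u) ∘ Option.map τ) D := by
  obtain ⟨-, hchord, hDu, hDx⟩ := hD
  rintro (_ | j)
  · simp [hDx]
  by_cases hj : j = u
  · simp [hj, hu, hDu]
  · have hτj : τ j ≠ u := fun h => hj (hτ (h.trans hu.symm))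
    simp [swap_apply_of_ne_of_ne, hτj, hchord j hj]

theorem cycles_rot_comp (hD : IsInsertedDiagram n τ u φ x D) (hn : n ≠ 0) (hτ : Injective τ)
    (hu : τ u = u) (hp : x + 1 = φ p) :
    cycles (rot n ∘ D) = cycles (swap none (some p) ∘ detachedWalk τ u) := by
  have : NeZero (2 * n - 1) := ⟨by omega⟩
  have hN : 2 * n = 2 * n - 1 + 1 := by omega
  exact (cycles_eq_of_semiconj (Equiv.ofBijective _ (hD.1.bijective_elim hN hp))
    ((hD.1.semiconj_elim_add_one hN hp).comp_right (hD.semiconj_elim hτ hu))).symm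

end IsInsertedDiagram

theorem slide_preserves_boundary_and_genus_general (n : ℕ) (hn : n ≠ 0)
    (τ : ZMod (2 * n - 1) → ZMod (2 * n - 1)) (p u : ZMod (2 * n - 1))
    (hτ : Injective τ) (hu : τ u = u) (hpu : p ≠ u)
    (φ φ' : ZMod (2 * n - 1) → ZMod (2 * n)) (x x' : ZMod (2 * n))
    (σ σ' : ZMod (2 * n) → ZMod (2 * n))
    (hσ : IsInsertedDiagram n τ u φ x σ) (hx : x + 1 = φ p)
    (hσ' : IsInsertedDiagram n τ u φ' x' σ') (hx' : x' = φ' (τ p) + 1) :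
    cycles (rot n ∘ σ') = cycles (rot n ∘ σ) ∧ genus n σ' = genus n σ := by
  have hτpu : τ p ≠ u := fun h => hpu (hτ (h.trans hu.symm))
  have hp : detachedWalk τ u (some p) = some (τ p + 1) := detachedWalk_some hτpu
  have hx'_succ : x' + 1 = φ' (τ p + 1) := by
    rw [hσ'.1.2, if_pos hx'.symm, hx']
    ring
  have hcycles : cycles (rot n ∘ σ') = cycles (rot n ∘ σ) := calc
    _ = cycles (swap none (some (τ p + 1)) ∘ detachedWalk τ u) :=
      hσ'.cycles_rot_comp hn hτ hu hx'_succ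
    _ = cycles (swap none (some p) ∘ detachedWalk τ u) := by
      rw [← hp]
      exact cycles_swap_apply_comp (detachedWalk_injective hτ) (by simp) (by simp [hp])
    _ = cycles (rot n ∘ σ) := (hσ.cycles_rot_comp hn hτ hu hx).symm
  exact ⟨hcycles, by rw [genus, genus, hcycles]⟩

/-- Sliding Lemma, chord-diagram form: if `σ'` is obtained from `σ` by sliding the
chord `e = {x, u}` along the chord `c = {p, q}` (moving the endpoint `x` of `e` from
the position immediately preceding `p` to the position immediately following `q`),
then `c(r ∘ σ') = c(r ∘ σ)`: the slide preserves the number of boundary components,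
and hence the genus, of the associated one-vertex ribbon graph. -/
theorem slide_preserves_boundary_and_genus (n : ℕ) (hn : 2 ≤ n)
    (τ : ZMod (2 * n - 1) → ZMod (2 * n - 1)) (p q u : ZMod (2 * n - 1))
    (hτ : IsConfig n τ p q u)
    (φ φ' : ZMod (2 * n - 1) → ZMod (2 * n)) (x x' : ZMod (2 * n))
    (σ σ' : ZMod (2 * n) → ZMod (2 * n))
    (hσ : IsInsertedDiagram n τ u φ x σ) (hx : x + 1 = φ p)
    (hσ' : IsInsertedDiagram n τ u φ' x' σ') (hx' : x' = φ' q + 1) :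
    cycles (rot n ∘ σ') = cycles (rot n ∘ σ) ∧ genus n σ' = genus n σ := by
  obtain ⟨hinv, rfl, hpq, hu, -⟩ := hτ
  exact slide_preserves_boundary_and_genus_general n (by omega) τ p u hinv.injective hu
    (fun hpu => hpq (by rw [hpu, hu])) φ φ' x x' σ σ' hσ hx hσ' hx'
end
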